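/- If the mean noise operator and the mean disturbance operator of a measuring process are scalar multiples of the identity (equivalently, the mean error and mean disturbance are independent of the object state), then the Heisenberg-type inequality holds: for a finite-dimensional measuring process (ℂᵐ, ξ, U, M) for ℂⁿ and Hermitian n×n matrices A and B, if n(A) = Tr_K[N(A)(I⊗|ξ⟩⟨ξ|)] = c·I and d(B) = Tr_K[D(B)(I⊗|ξ⟩⟨ξ|)] = c'·I for some scalars c, c' ∈ ℂ, then for every density matrix ρ on ℂⁿ, ε(A;ρ)·η(B;ρ) ≥ (1/2)·|Tr[(AB − BA)ρ]|. -/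

import Mathlib

open ComplexOrder Kronecker Matrix

/-- The rank-one projection `|ξ⟩⟨ξ|` onto a vector `ξ`. -/
noncomputable def rankOneProj {m : ℕ} (ξ : Fin m → ℂ) : Matrix (Fin m) (Fin m) ℂ :=
  Matrix.vecMulVec ξ (star ξ)

/-- The partial trace over the second tensor factor. -/
noncomputable def trK {n m : ℕ} (X : Matrix (Fin n × Fin m) (Fin n × Fin m) ℂ) :
    Matrix (Fin n) (Fin n) ℂ :=
  Matrix.of fun i j => ∑ k, X (i, k) (j, k)

/-- The noise operator `N(A) = U†(I⊗M)U − A⊗I` of a measuring process. -/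
noncomputable def noiseOp {n m : ℕ} (U : Matrix (Fin n × Fin m) (Fin n × Fin m) ℂ)
    (M : Matrix (Fin m) (Fin m) ℂ) (A : Matrix (Fin n) (Fin n) ℂ) :
    Matrix (Fin n × Fin m) (Fin n × Fin m) ℂ :=
  Uᴴ * ((1 : Matrix (Fin n) (Fin n) ℂ) ⊗ₖ M) * U - A ⊗ₖ (1 : Matrix (Fin m) (Fin m) ℂ)

/-- The disturbance operator `D(B) = U†(B⊗I)U − B⊗I` of a measuring process. -/
noncomputable def distOp {n m : ℕ} (U : Matrix (Fin n × Fin m) (Fin n × Fin m) ℂ)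
    (B : Matrix (Fin n) (Fin n) ℂ) :
    Matrix (Fin n × Fin m) (Fin n × Fin m) ℂ :=
  Uᴴ * (B ⊗ₖ (1 : Matrix (Fin m) (Fin m) ℂ)) * U - B ⊗ₖ (1 : Matrix (Fin m) (Fin m) ℂ)

/-- The rms noise `ε(A;ρ) = (Tr[N(A)²(ρ⊗|ξ⟩⟨ξ|)])^{1/2}`. -/
noncomputable def rmsNoise {n m : ℕ} (U : Matrix (Fin n × Fin m) (Fin n × Fin m) ℂ)
    (M : Matrix (Fin m) (Fin m) ℂ) (ξ : Fin m → ℂ) (A ρ : Matrix (Fin n) (Fin n) ℂ) : ℝ :=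
  Real.sqrt ((noiseOp U M A * noiseOp U M A * (ρ ⊗ₖ rankOneProj ξ)).trace.re)

/-- The rms disturbance `η(B;ρ) = (Tr[D(B)²(ρ⊗|ξ⟩⟨ξ|)])^{1/2}`. -/
noncomputable def rmsDist {n m : ℕ} (U : Matrix (Fin n × Fin m) (Fin n × Fin m) ℂ)
    (ξ : Fin m → ℂ) (B ρ : Matrix (Fin n) (Fin n) ℂ) : ℝ :=
  Real.sqrt ((distOp U B * distOp U B * (ρ ⊗ₖ rankOneProj ξ)).trace.re)

/-- The standard deviation of a Hermitian matrix `C` in the state `τ`: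
`σ(C;τ)² = Tr[C²τ] − (Tr[Cτ])²`. -/
noncomputable def stddev {k : ℕ} (C τ : Matrix (Fin k) (Fin k) ℂ) : ℝ :=
  Real.sqrt ((C * C * τ).trace.re - ((C * τ).trace.re) ^ 2)

/-!
Put `X = U†(I⊗M)U` and `Y = U†(B⊗I)U`, so that `N(A) = X − A⊗I` and `D(B) = Y − B⊗I`. Since `X`
and `Y` commute, expanding `[N(A) + A⊗I, D(B) + B⊗I] = 0` and averaging over the probe gives
`Tr([N(A), D(B)](ρ⊗|ξ⟩⟨ξ|)) = −Tr(([A, B] + [n(A), B] + [A, d(B)])ρ)`, whose absolute value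
Robertson's inequality bounds by `2 ε(A;ρ) η(B;ρ)`. The two mixed commutators vanish as soon as
`n(A)` commutes with `B` and `d(B)` with `A`, in particular when `n(A)` and `d(B)` are scalar.
-/

section Robertson

variable {𝕜 ι : Type*} [RCLike 𝕜] [Fintype ι] {σ : Matrix ι ι 𝕜}

theorem norm_trace_conjTranspose_mul_mul_le (hσ : σ.PosSemidef) (X Y : Matrix ι ι 𝕜) :
    ‖(Xᴴ * Y * σ).trace‖ ≤
      √(RCLike.re (Xᴴ * X * σ).trace) * √(RCLike.re (Yᴴ * Y * σ).trace) := by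
  let := toMatrixSeminormedAddCommGroup σ hσ
  let := toMatrixInnerProductSpace σ hσ
  have inner_eq (Z W : Matrix ι ι 𝕜) : inner 𝕜 Z W = (Zᴴ * W * σ).trace :=
    trace_mul_cycle W σ Zᴴ
  simpa only [norm_eq_sqrt_re_inner (𝕜 := 𝕜), inner_eq] using norm_inner_le_norm (𝕜 := 𝕜) X Y

theorem half_norm_trace_lie_mul_le (hσ : σ.PosSemidef) {N D : Matrix ι ι 𝕜}
    (hN : N.IsHermitian) (hD : D.IsHermitian) :
    (1 / 2) * ‖(⁅N, D⁆ * σ).trace‖ ≤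
      √(RCLike.re (N * N * σ).trace) * √(RCLike.re (D * D * σ).trace) := by
  have hND := norm_trace_conjTranspose_mul_mul_le hσ N D
  have hDN := norm_trace_conjTranspose_mul_mul_le hσ D N
  rw [hN.eq, hD.eq] at hND hDN
  have triangle : ‖(⁅N, D⁆ * σ).trace‖ ≤ ‖(N * D * σ).trace‖ + ‖(D * N * σ).trace‖ := by
    rw [Ring.lie_def, sub_mul, trace_sub]
    exact norm_sub_le _ _
  linarith

end Robertson

theorem commute_mul_mul_of_mul_eq_one {R ι κ : Type*} [Semiring R] [Fintype ι] [Fintype κ]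
    [DecidableEq κ] {U : Matrix κ ι R} {U' : Matrix ι κ R} (hU : U * U' = 1) {V W : Matrix κ κ R}
    (hVW : Commute V W) : Commute (U' * V * U) (U' * W * U) := by
  have conj_mul_conj (S T : Matrix κ κ R) : U' * S * U * (U' * T * U) = U' * (S * T) * U := by
    calc U' * S * U * (U' * T * U) = U' * S * (U * U') * T * U := by simp only [Matrix.mul_assoc]
      _ = U' * (S * T) * U := by simp only [hU, Matrix.mul_one, Matrix.mul_assoc]
  rw [commute_iff_eq, conj_mul_conj, conj_mul_conj, hVW.eq]

theorem lie_sub_sub_of_commute {R : Type*} [Ring R] {x y : R} (hxy : Commute x y) (a b : R) :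
    ⁅x - a, y - b⁆ = -(⁅a, b⁆ + ⁅x - a, b⁆ + ⁅a, y - b⁆) := by
  simp only [Ring.lie_def, mul_sub, sub_mul, hxy.eq]
  abel

section Kronecker

variable {R ι κ : Type*}

theorem commute_one_kronecker_kronecker_one [CommSemiring R] [Fintype ι] [Fintype κ]
    [DecidableEq ι] [DecidableEq κ] (M : Matrix κ κ R) (B : Matrix ι ι R) :
    Commute ((1 : Matrix ι ι R) ⊗ₖ M) (B ⊗ₖ (1 : Matrix κ κ R)) := by
  simp only [commute_iff_eq, ← mul_kronecker_mul, one_mul, mul_one]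

theorem isHermitian_kronecker [CommMagma R] [StarMul R] {A : Matrix ι ι R} {B : Matrix κ κ R}
    (hA : A.IsHermitian) (hB : B.IsHermitian) : (A ⊗ₖ B).IsHermitian := by
  rw [IsHermitian, conjTranspose_kronecker, hA.eq, hB.eq]

end Kronecker

section ProbeMean

variable {n m : ℕ}

/-- The mean `Tr_K[X(I⊗P)]` of an operator `X` on the composite system over a probe prepared in the
state `P`. The mean noise and mean disturbance operators `n(A)` and `d(B)` are the instances
`X = N(A)` and `X = D(B)` with `P = |ξ⟩⟨ξ|`. -/
noncomputable def probeMean (P : Matrix (Fin m) (Fin m) ℂ)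
    (X : Matrix (Fin n × Fin m) (Fin n × Fin m) ℂ) : Matrix (Fin n) (Fin n) ℂ :=
  trK (X * ((1 : Matrix (Fin n) (Fin n) ℂ) ⊗ₖ P))

variable (P : Matrix (Fin m) (Fin m) ℂ) (X : Matrix (Fin n × Fin m) (Fin n × Fin m) ℂ)
  (A B ρ : Matrix (Fin n) (Fin n) ℂ)

theorem trace_mul_kronecker_one :
    (X * (ρ ⊗ₖ (1 : Matrix (Fin m) (Fin m) ℂ))).trace = (trK X * ρ).trace := by
  simp only [trace, diag_apply, mul_apply, trK, of_apply, Fintype.sum_prod_type,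
    kroneckerMap_apply, one_apply, mul_ite, mul_one, mul_zero, Finset.sum_ite_eq',
    Finset.mem_univ, if_true, Finset.sum_mul]
  exact Finset.sum_congr rfl fun i _ => Finset.sum_comm

theorem trK_kronecker : trK (A ⊗ₖ P) = P.trace • A := by
  ext i j
  simp only [trK, of_apply, kroneckerMap_apply, ← Finset.mul_sum, Matrix.smul_apply,
    smul_eq_mul]
  exact mul_comm _ _

theorem probeMean_kronecker_one :
    probeMean P (A ⊗ₖ (1 : Matrix (Fin m) (Fin m) ℂ)) = P.trace • A := by
  rw [probeMean, ← mul_kronecker_mul, mul_one, one_mul, trK_kronecker]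

theorem trace_mul_kronecker : (X * (ρ ⊗ₖ P)).trace = (probeMean P X * ρ).trace := by
  rw [probeMean, ← trace_mul_kronecker_one, mul_assoc, ← mul_kronecker_mul, one_mul, mul_one]

theorem trace_mul_kronecker_one_mul_kronecker :
    (X * (B ⊗ₖ 1) * (ρ ⊗ₖ P)).trace = (probeMean P X * B * ρ).trace := by
  rw [mul_assoc, ← mul_kronecker_mul, one_mul, trace_mul_kronecker, mul_assoc]

theorem trace_kronecker_one_mul_mul_kronecker :
    ((A ⊗ₖ 1) * X * (ρ ⊗ₖ P)).trace = (A * probeMean P X * ρ).trace := by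
  rw [trace_mul_cycle, trace_mul_comm, ← mul_kronecker_mul, mul_one, trace_mul_kronecker,
    trace_mul_comm, trace_mul_cycle A]

theorem trace_lie_kronecker_one_mul_kronecker :
    (⁅X, B ⊗ₖ 1⁆ * (ρ ⊗ₖ P)).trace = (⁅probeMean P X, B⁆ * ρ).trace := by
  simp only [Ring.lie_def, sub_mul, trace_sub, trace_mul_kronecker_one_mul_kronecker,
    trace_kronecker_one_mul_mul_kronecker]

theorem trace_kronecker_one_lie_mul_kronecker :
    (⁅A ⊗ₖ (1 : Matrix (Fin m) (Fin m) ℂ), X⁆ * (ρ ⊗ₖ P)).trace =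
      (⁅A, probeMean P X⁆ * ρ).trace := by
  simp only [Ring.lie_def, sub_mul, trace_sub, trace_mul_kronecker_one_mul_kronecker,
    trace_kronecker_one_mul_mul_kronecker]

variable {P X} in
theorem trace_lie_sub_kronecker_one_mul_kronecker (hP : P.trace = 1)
    {Y : Matrix (Fin n × Fin m) (Fin n × Fin m) ℂ} (hXY : Commute X Y) :
    (⁅X - A ⊗ₖ 1, Y - B ⊗ₖ 1⁆ * (ρ ⊗ₖ P)).trace =
      -((⁅A, B⁆ + ⁅probeMean P (X - A ⊗ₖ 1), B⁆ + ⁅A, probeMean P (Y - B ⊗ₖ 1)⁆) * ρ).trace := by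
  have hAB : (⁅A ⊗ₖ (1 : Matrix (Fin m) (Fin m) ℂ), B ⊗ₖ 1⁆ * (ρ ⊗ₖ P)).trace =
      (⁅A, B⁆ * ρ).trace := by
    rw [trace_lie_kronecker_one_mul_kronecker, probeMean_kronecker_one, hP, one_smul]
  simp only [lie_sub_sub_of_commute hXY, neg_mul, add_mul, trace_neg, trace_add, hAB,
    trace_lie_kronecker_one_mul_kronecker, trace_kronecker_one_lie_mul_kronecker]

end ProbeMean

section MeasuringProcess

variable {n m : ℕ} {ξ : Fin m → ℂ} {U : Matrix (Fin n × Fin m) (Fin n × Fin m) ℂ}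
  {M : Matrix (Fin m) (Fin m) ℂ} {A B ρ : Matrix (Fin n) (Fin n) ℂ}

theorem posSemidef_rankOneProj (ξ : Fin m → ℂ) : (rankOneProj ξ).PosSemidef :=
  posSemidef_vecMulVec_self_star ξ

theorem trace_rankOneProj (ξ : Fin m → ℂ) : (rankOneProj ξ).trace = star ξ ⬝ᵥ ξ := by
  rw [rankOneProj, trace_vecMulVec, dotProduct_comm]

theorem isHermitian_noiseOp (U : Matrix (Fin n × Fin m) (Fin n × Fin m) ℂ) (hM : M.IsHermitian)
    (hA : A.IsHermitian) : (noiseOp U M A).IsHermitian :=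
  (isHermitian_conjTranspose_mul_mul U (isHermitian_kronecker isHermitian_one hM)).sub
    (isHermitian_kronecker hA isHermitian_one)

theorem isHermitian_distOp (U : Matrix (Fin n × Fin m) (Fin n × Fin m) ℂ) (hB : B.IsHermitian) :
    (distOp U B).IsHermitian :=
  have hB1 := isHermitian_kronecker hB (isHermitian_one (n := Fin m))
  (isHermitian_conjTranspose_mul_mul U hB1).sub hB1

theorem trace_lie_noiseOp_distOp_mul_kronecker (hξ : star ξ ⬝ᵥ ξ = 1) (hU : U * Uᴴ = 1)
    (M : Matrix (Fin m) (Fin m) ℂ) (A B ρ : Matrix (Fin n) (Fin n) ℂ) :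
    (⁅noiseOp U M A, distOp U B⁆ * (ρ ⊗ₖ rankOneProj ξ)).trace =
      -((⁅A, B⁆ + ⁅probeMean (rankOneProj ξ) (noiseOp U M A), B⁆ +
        ⁅A, probeMean (rankOneProj ξ) (distOp U B)⁆) * ρ).trace :=
  trace_lie_sub_kronecker_one_mul_kronecker A B ρ ((trace_rankOneProj ξ).trans hξ)
    (commute_mul_mul_of_mul_eq_one hU (commute_one_kronecker_kronecker_one M B))

theorem half_norm_trace_lie_add_lie_probeMean_le_rmsNoise_mul_rmsDist
    (hξ : star ξ ⬝ᵥ ξ = 1) (hU : U * Uᴴ = 1) (hM : M.IsHermitian)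
    (hA : A.IsHermitian) (hB : B.IsHermitian) (hρ : ρ.PosSemidef) :
    (1 / 2) * ‖((⁅A, B⁆ + ⁅probeMean (rankOneProj ξ) (noiseOp U M A), B⁆ +
        ⁅A, probeMean (rankOneProj ξ) (distOp U B)⁆) * ρ).trace‖ ≤
      rmsNoise U M ξ A ρ * rmsDist U ξ B ρ := by
  have robertson := half_norm_trace_lie_mul_le (hρ.kronecker (posSemidef_rankOneProj ξ))
    (isHermitian_noiseOp U hM hA) (isHermitian_distOp U hB)
  rwa [trace_lie_noiseOp_distOp_mul_kronecker hξ hU, norm_neg] at robertson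

theorem heisenberg_type_of_state_independent_noise_disturbance_general
    (hξ : star ξ ⬝ᵥ ξ = 1) (hU : U * Uᴴ = 1) (hM : M.IsHermitian)
    (hA : A.IsHermitian) (hB : B.IsHermitian)
    (hmeanN : Commute (probeMean (rankOneProj ξ) (noiseOp U M A)) B)
    (hmeanD : Commute A (probeMean (rankOneProj ξ) (distOp U B)))
    (hρ : ρ.PosSemidef) :
    (1 / 2) * ‖((A * B - B * A) * ρ).trace‖ ≤ rmsNoise U M ξ A ρ * rmsDist U ξ B ρ := by
  simpa only [hmeanN.lie_eq, hmeanD.lie_eq, add_zero, Ring.lie_def] using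
    half_norm_trace_lie_add_lie_probeMean_le_rmsNoise_mul_rmsDist hξ hU hM hA hB hρ

end MeasuringProcess

/-- If the mean noise operator and the mean disturbance operator are scalar,
then the Heisenberg-type inequality holds. -/
theorem heisenberg_type_of_state_independent_noise_disturbance {n m : ℕ}
    (hn : 0 < n) (hm : 0 < m)
    (ξ : Fin m → ℂ) (hξ : star ξ ⬝ᵥ ξ = 1)
    (U : Matrix (Fin n × Fin m) (Fin n × Fin m) ℂ)
    (hU : U * Uᴴ = 1) (hU' : Uᴴ * U = 1)
    (M : Matrix (Fin m) (Fin m) ℂ) (hM : M.IsHermitian)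
    (A B : Matrix (Fin n) (Fin n) ℂ) (hA : A.IsHermitian) (hB : B.IsHermitian)
    (c c' : ℂ)
    (hmeanN : trK (noiseOp U M A * ((1 : Matrix (Fin n) (Fin n) ℂ) ⊗ₖ rankOneProj ξ))
      = c • (1 : Matrix (Fin n) (Fin n) ℂ))
    (hmeanD : trK (distOp U B * ((1 : Matrix (Fin n) (Fin n) ℂ) ⊗ₖ rankOneProj ξ))
      = c' • (1 : Matrix (Fin n) (Fin n) ℂ)) :
    ∀ ρ : Matrix (Fin n) (Fin n) ℂ, ρ.PosSemidef → ρ.trace = 1 →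
      rmsNoise U M ξ A ρ * rmsDist U ξ B ρ ≥
        (1 / 2) * ‖((A * B - B * A) * ρ).trace‖ := by
  intro ρ hρ _
  refine heisenberg_type_of_state_independent_noise_disturbance_general hξ hU hM hA hB ?_ ?_ hρ
  · simpa only [probeMean, hmeanN] using (Commute.one_left B).smul_left c
  · simpa only [probeMean, hmeanD] using (Commute.one_right A).smul_right c'
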